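/- Suppose n is even. Let M be a matching of maximum weight among all matchings of size n/3 in G, and let N be a matching of maximum weight among all matchings of size n/2 in G. Define B1 = (2/3)·w(N) + (1/2)·OPT − (1/2)·Σ_{xyz ∈ P*} max{w(xy), w(yz)}; B2 = (2/3)·w(M) + (1/12)·w(M'_1) + (1/6)·w(M''_1) + (1/4)·w(M'''_1) + (1/6)·w(M_2) + (1/4)·w(M_3) + (1/3)·w(M_4) + (1/2)·w(X_2) + (1/2)·w(X_3) + (1/2)·w(X_4) + w(X_5) + (1/2)·w(X_7) − (1/4)·w(Y_7) + (1/4)·w(P*_6) + (1/4)·w(P*_8); B3 = (4/9)·(2·w(Y_5) + 2·w(Y_6) + w(P*_7) + w(P*_8) + Σ_{xyz ∈ P*_7 ∪ P*_8} max{w(xy), w(yz)}). Then max{B1, B2, B3} ≥ (10/17)·OPT. -/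

import Mathlib

open Finset
open scoped Classical

namespace MW3PP

/-- A 3-path `xyz`: a path on three distinct vertices with middle vertex `y`. -/
structure P3 (V : Type*) where
  x : V
  y : V
  z : V
  hxy : x ≠ y
  hyz : y ≠ z
  hxz : x ≠ z

variable {V : Type*} [Fintype V] [DecidableEq V]

/-- The vertex set of a 3-path. -/
def P3.verts (p : P3 V) : Finset V := {p.x, p.y, p.z}

/-- The two edges of a 3-path. -/
def P3.edges (p : P3 V) : Finset (Sym2 V) := {s(p.x, p.y), s(p.y, p.z)}

/-- The weight of a 3-path. -/
def P3.wt (w : Sym2 V → ℝ) (p : P3 V) : ℝ := w s(p.x, p.y) + w s(p.y, p.z)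

/-- The total weight of a set of edges. -/
def ew (w : Sym2 V → ℝ) (F : Finset (Sym2 V)) : ℝ := ∑ e ∈ F, w e

/-- The total weight of a set of 3-paths. -/
def pw (w : Sym2 V → ℝ) (P : Finset (P3 V)) : ℝ := ∑ p ∈ P, p.wt w

/-- `∑_{xyz ∈ S} max (w (xy)) (w (yz))`. -/
def maxSum (w : Sym2 V → ℝ) (S : Finset (P3 V)) : ℝ :=
  ∑ p ∈ S, max (w s(p.x, p.y)) (w s(p.y, p.z))

/-- A perfect 3-path packing: `n/3` pairwise vertex-disjoint 3-paths covering all vertices. -/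
def IsPacking (P : Finset (P3 V)) : Prop :=
  P.card = Fintype.card V / 3 ∧
  (∀ p ∈ P, ∀ q ∈ P, p ≠ q → Disjoint p.verts q.verts) ∧
  (∀ v : V, ∃ p ∈ P, v ∈ p.verts)

/-- A maximum-weight perfect 3-path packing. -/
def IsMaxPacking (w : Sym2 V → ℝ) (P : Finset (P3 V)) : Prop :=
  IsPacking P ∧ ∀ Q : Finset (P3 V), IsPacking Q → pw w Q ≤ pw w P

/-- A matching: a set of pairwise vertex-disjoint (non-loop) edges. -/
def IsMatching (M : Finset (Sym2 V)) : Prop :=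
  (∀ e ∈ M, ¬ e.IsDiag) ∧
  ∀ e ∈ M, ∀ f ∈ M, e ≠ f → ∀ v : V, v ∈ e → v ∉ f

/-- A maximum-weight matching among all matchings of size `k`. -/
def IsMaxMatchingOfSize (w : Sym2 V → ℝ) (k : ℕ) (M : Finset (Sym2 V)) : Prop :=
  IsMatching M ∧ M.card = k ∧
  ∀ M' : Finset (Sym2 V), IsMatching M' → M'.card = k → ew w M' ≤ ew w M

/-- `v ∈ V(M)` : vertex `v` is covered by the matching `M`. -/
def covered (M : Finset (Sym2 V)) (v : V) : Prop := ∃ e ∈ M, v ∈ e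

/-- `e_u` : the edge of `M` containing `u` (junk value if there is none). -/
noncomputable def eMatch (M : Finset (Sym2 V)) (u : V) : Sym2 V :=
  if h : ∃ e ∈ M, u ∈ e then h.choose else s(u, u)

/-- The cost `c` of an edge with respect to a matching `M`:
`c(uv) = w(uv) - min (w (e_u)) (w (e_v))` if both endpoints are covered by `M`,
and `c(uv) = w(uv)` otherwise. -/
noncomputable def cost (w : Sym2 V → ℝ) (M : Finset (Sym2 V)) : Sym2 V → ℝ :=
  Sym2.lift ⟨fun u v =>
    if covered M u ∧ covered M v then
      w s(u, v) - min (w (eMatch M u)) (w (eMatch M v))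
    else w s(u, v), by
      intro u v
      dsimp only
      by_cases h : covered M u ∧ covered M v
      · rw [if_pos h, if_pos (show covered M v ∧ covered M u from ⟨h.2, h.1⟩),
          Sym2.eq_swap, min_comm]
      · rw [if_neg h, if_neg (show ¬(covered M v ∧ covered M u) from fun h' => h ⟨h'.2, h'.1⟩),
          Sym2.eq_swap]⟩

/-- The total cost of a set of edges. -/
noncomputable def cw (w : Sym2 V → ℝ) (M F : Finset (Sym2 V)) : ℝ := ∑ e ∈ F, cost w M e

/-- The number of vertices of the 3-path `p` covered by `M`. -/
noncomputable def kcnt (M : Finset (Sym2 V)) (p : P3 V) : ℕ :=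
  (p.verts.filter fun v => covered M v).card

/-- Exactly one of the two edges of `p` lies in `M`. -/
def exOne (M : Finset (Sym2 V)) (p : P3 V) : Prop :=
  (s(p.x, p.y) ∈ M ∧ s(p.y, p.z) ∉ M) ∨ (s(p.x, p.y) ∉ M ∧ s(p.y, p.z) ∈ M)

def cls1 (M : Finset (Sym2 V)) (p : P3 V) : Prop := kcnt M p = 0
def cls2 (M : Finset (Sym2 V)) (p : P3 V) : Prop := kcnt M p = 1 ∧ ¬ covered M p.y
def cls3 (M : Finset (Sym2 V)) (p : P3 V) : Prop := kcnt M p = 1 ∧ covered M p.y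
def cls4 (M : Finset (Sym2 V)) (p : P3 V) : Prop := kcnt M p = 2 ∧ ¬ covered M p.y
def cls5 (M : Finset (Sym2 V)) (p : P3 V) : Prop := kcnt M p = 2 ∧ covered M p.y ∧ exOne M p
def cls6 (M : Finset (Sym2 V)) (p : P3 V) : Prop :=
  kcnt M p = 2 ∧ covered M p.y ∧ s(p.x, p.y) ∉ M ∧ s(p.y, p.z) ∉ M
def cls7 (M : Finset (Sym2 V)) (p : P3 V) : Prop := kcnt M p = 3 ∧ exOne M p
def cls8 (M : Finset (Sym2 V)) (p : P3 V) : Prop :=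
  kcnt M p = 3 ∧ s(p.x, p.y) ∉ M ∧ s(p.y, p.z) ∉ M

/-- The subset of a set of 3-paths satisfying a predicate. -/
noncomputable def psel (P : Finset (P3 V)) (c : P3 V → Prop) : Finset (P3 V) := P.filter c

/-- The set of all edges of the 3-paths in `S`. -/
def Esub (S : Finset (P3 V)) : Finset (Sym2 V) := S.biUnion P3.edges

/-- The heaviest edge of a 3-path (the edge `xy` in case of a tie). -/
noncomputable def heavy (w : Sym2 V → ℝ) (p : P3 V) : Sym2 V :=
  if w s(p.y, p.z) ≤ w s(p.x, p.y) then s(p.x, p.y) else s(p.y, p.z)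

noncomputable def X1 (w : Sym2 V → ℝ) (P : Finset (P3 V)) (M : Finset (Sym2 V)) :
    Finset (Sym2 V) := (psel P (cls1 M)).image (heavy w)
noncomputable def X2 (P : Finset (P3 V)) (M : Finset (Sym2 V)) : Finset (Sym2 V) :=
  (psel P (cls2 M)).image fun p => if covered M p.x then s(p.x, p.y) else s(p.y, p.z)
noncomputable def X3 (w : Sym2 V → ℝ) (P : Finset (P3 V)) (M : Finset (Sym2 V)) :
    Finset (Sym2 V) := (psel P (cls3 M)).image (heavy w)
noncomputable def X4 (w : Sym2 V → ℝ) (P : Finset (P3 V)) (M : Finset (Sym2 V)) :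
    Finset (Sym2 V) := (psel P (cls4 M)).image (heavy w)
noncomputable def X5 (P : Finset (P3 V)) (M : Finset (Sym2 V)) : Finset (Sym2 V) :=
  (psel P (cls5 M)).image fun p => if s(p.x, p.y) ∈ M then s(p.y, p.z) else s(p.x, p.y)
noncomputable def X6 (P : Finset (P3 V)) (M : Finset (Sym2 V)) : Finset (Sym2 V) :=
  (psel P (cls6 M)).image fun p => if covered M p.x then s(p.y, p.z) else s(p.x, p.y)
noncomputable def X7 (P : Finset (P3 V)) (M : Finset (Sym2 V)) : Finset (Sym2 V) :=
  (psel P (cls7 M)).image fun p => if s(p.x, p.y) ∈ M then s(p.y, p.z) else s(p.x, p.y)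
noncomputable def X8 (w : Sym2 V → ℝ) (P : Finset (P3 V)) (M : Finset (Sym2 V)) :
    Finset (Sym2 V) := (psel P (cls8 M)).image (heavy w)

noncomputable def Y1 (w : Sym2 V → ℝ) (P : Finset (P3 V)) (M : Finset (Sym2 V)) :
    Finset (Sym2 V) := Esub (psel P (cls1 M)) \ X1 w P M
noncomputable def Y2 (P : Finset (P3 V)) (M : Finset (Sym2 V)) : Finset (Sym2 V) :=
  Esub (psel P (cls2 M)) \ X2 P M
noncomputable def Y3 (w : Sym2 V → ℝ) (P : Finset (P3 V)) (M : Finset (Sym2 V)) :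
    Finset (Sym2 V) := Esub (psel P (cls3 M)) \ X3 w P M
noncomputable def Y4 (w : Sym2 V → ℝ) (P : Finset (P3 V)) (M : Finset (Sym2 V)) :
    Finset (Sym2 V) := Esub (psel P (cls4 M)) \ X4 w P M
noncomputable def Y5 (P : Finset (P3 V)) (M : Finset (Sym2 V)) : Finset (Sym2 V) :=
  Esub (psel P (cls5 M)) \ X5 P M
noncomputable def Y6 (P : Finset (P3 V)) (M : Finset (Sym2 V)) : Finset (Sym2 V) :=
  Esub (psel P (cls6 M)) \ X6 P M
noncomputable def Y7 (P : Finset (P3 V)) (M : Finset (Sym2 V)) : Finset (Sym2 V) :=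
  Esub (psel P (cls7 M)) \ X7 P M
noncomputable def Y8 (w : Sym2 V → ℝ) (P : Finset (P3 V)) (M : Finset (Sym2 V)) :
    Finset (Sym2 V) := Esub (psel P (cls8 M)) \ X8 w P M

/-- An edge is a middle edge (w.r.t. `M`) if exactly one of its endpoints lies in `V(M)`. -/
def isMiddle (M : Finset (Sym2 V)) (e : Sym2 V) : Prop :=
  ∃ u v : V, e = s(u, v) ∧ covered M u ∧ ¬ covered M v

/-- Two edges share a vertex. -/
def shares (e f : Sym2 V) : Prop := ∃ v, v ∈ e ∧ v ∈ f

/-- `g` is a middle edge of some 3-path in `S`. -/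
def middleIn (M : Finset (Sym2 V)) (S : Finset (P3 V)) (g : Sym2 V) : Prop :=
  (∃ p ∈ S, g ∈ p.edges) ∧ isMiddle M g

/-- The 3-paths of `P` lying in classes 2, 3 or 4. -/
noncomputable def P234 (P : Finset (P3 V)) (M : Finset (Sym2 V)) : Finset (P3 V) :=
  psel P fun p => cls2 M p ∨ cls3 M p ∨ cls4 M p

/-- `M_1`: edges of `M` sharing a vertex with at least one middle edge of a 3-path of `P*_6`. -/
noncomputable def Mset1 (P : Finset (P3 V)) (M : Finset (Sym2 V)) : Finset (Sym2 V) :=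
  M.filter fun f => ∃ g, middleIn M (psel P (cls6 M)) g ∧ shares f g

/-- `M_2`: edges of `M` sharing a vertex with at least one middle edge, all middle edges met
belonging to 3-paths of `P*_2 ∪ P*_3 ∪ P*_4`. -/
noncomputable def Mset2 (P : Finset (P3 V)) (M : Finset (Sym2 V)) : Finset (Sym2 V) :=
  M.filter fun f =>
    (∃ g, middleIn M P g ∧ shares f g) ∧
    ∀ g, middleIn M P g → shares f g → middleIn M (P234 P M) g

/-- `M_3 = M ∩ E(P*_7)`. -/
noncomputable def Mset3 (P : Finset (P3 V)) (M : Finset (Sym2 V)) : Finset (Sym2 V) :=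
  M ∩ Esub (psel P (cls7 M))

/-- `M_4 = M ∩ E(P*_5)`. -/
noncomputable def Mset4 (P : Finset (P3 V)) (M : Finset (Sym2 V)) : Finset (Sym2 V) :=
  M ∩ Esub (psel P (cls5 M))

/-- The middle edges of 3-paths of `P*_6`. -/
noncomputable def mid6 (P : Finset (P3 V)) (M : Finset (Sym2 V)) : Finset (Sym2 V) :=
  (Esub (psel P (cls6 M))).filter (isMiddle M)

/-- `M'_1`: edges of `M_1` meeting exactly one middle edge of a 3-path of `P*_6` and
no middle edge of a 3-path of `P*_2 ∪ P*_3 ∪ P*_4`. -/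
noncomputable def Mset1' (P : Finset (P3 V)) (M : Finset (Sym2 V)) : Finset (Sym2 V) :=
  (Mset1 P M).filter fun f =>
    ((mid6 P M).filter fun g => shares f g).card = 1 ∧
    ∀ g, middleIn M (P234 P M) g → ¬ shares f g

/-- `M''_1`: edges of `M_1` meeting two middle edges of 3-paths of `P*_6`. -/
noncomputable def Mset1'' (P : Finset (P3 V)) (M : Finset (Sym2 V)) : Finset (Sym2 V) :=
  (Mset1 P M).filter fun f => ((mid6 P M).filter fun g => shares f g).card = 2

/-- `M'''_1`: edges of `M_1` meeting exactly one middle edge of a 3-path of `P*_6` and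
at least one middle edge of a 3-path of `P*_2 ∪ P*_3 ∪ P*_4`. -/
noncomputable def Mset1''' (P : Finset (P3 V)) (M : Finset (Sym2 V)) : Finset (Sym2 V) :=
  (Mset1 P M).filter fun f =>
    ((mid6 P M).filter fun g => shares f g).card = 1 ∧
    ∃ g, middleIn M (P234 P M) g ∧ shares f g

/-- Assumption on `P*`: for every 3-path `xyz ∈ P*` with `y ∉ V(M)` and `x, z ∈ V(M)`,
the vertices `x` and `z` lie in two distinct edges of `M`. -/
def Ass (P : Finset (P3 V)) (M : Finset (Sym2 V)) : Prop :=
  ∀ p ∈ P, ¬ covered M p.y → covered M p.x → covered M p.z →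
    ∃ e ∈ M, ∃ f ∈ M, p.x ∈ e ∧ p.z ∈ f ∧ e ≠ f

/-- An admissible edge w.r.t. `M`: either both endpoints are in `V(M)` and lie in two distinct
edges of `M`, or exactly one endpoint is in `V(M)`. -/
def goodEdge (M : Finset (Sym2 V)) (e : Sym2 V) : Prop :=
  (∃ u v : V, e = s(u, v) ∧ covered M u ∧ covered M v ∧ ∀ f ∈ M, ¬(u ∈ f ∧ v ∈ f)) ∨
  (∃ u v : V, e = s(u, v) ∧ covered M u ∧ ¬ covered M v)

/-!
The convex combination of the three bounds with weights `8 / 17`, `8 / 17`, `1 / 17` is already at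
least `10 / 17 * OPT`.

The heaviest edges of the 3-paths of `P*` form a matching, so `w(M)` is at least the sum of the
maxima. For `w(N)`, start from the matching `M ∪ X_1 ∪ Y_2` and exchange each edge `e` of `M` for
the edges of `X_3 ∪ X_4` meeting it whenever these weigh more. What this fails to gain at `e` is
the smaller of the two weights; together with the edges of `X_6` at `e` it is paid for by the terms
`M'_1`, `M''_1`, `M'''_1`, `M_2` of `B_2`, since at most two edges of `X_3 ∪ X_4 ∪ X_6` meet `e`
and, by the maximality of `M`, no edge of `X_6` meeting `e` is heavier than `e`. What remains is one
linear inequality between `w(X_i)`, `w(Y_i)` and the sum of the maxima for each class `P*_i`.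
-/

/-! ### Matchings -/

section Matching

variable {α : Type*} {M F H : Finset (Sym2 α)} {e f g : Sym2 α} {v : α} {w : Sym2 α → ℝ} {k : ℕ}

theorem IsMatching.eq_of_mem (hM : IsMatching M) (he : e ∈ M) (hf : f ∈ M) (hve : v ∈ e)
    (hvf : v ∈ f) : e = f := by
  by_contra h
  exact hM.2 e he f hf h v hve hvf

theorem IsMatching.subset (hM : IsMatching M) (h : F ⊆ M) : IsMatching F :=
  ⟨fun e he => hM.1 e (h he), fun e he f hf => hM.2 e (h he) f (h hf)⟩

theorem isMatching_singleton (hg : ¬ g.IsDiag) : IsMatching {g} := by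
  refine ⟨fun e he => Finset.mem_singleton.1 he ▸ hg, fun e he f hf hne => ?_⟩
  exact absurd ((Finset.mem_singleton.1 he).trans (Finset.mem_singleton.1 hf).symm) hne

theorem disjoint_of_not_covered (h : ∀ v, covered F v → ¬ covered H v) : Disjoint F H := by
  refine Finset.disjoint_left.2 fun e heF heH => ?_
  induction e with
  | _ a b => exact h a ⟨_, heF, Sym2.mem_mk_left a b⟩ ⟨_, heH, Sym2.mem_mk_left a b⟩

theorem IsMatching.union [DecidableEq α] (hF : IsMatching F) (hH : IsMatching H)
    (h : ∀ v, covered F v → ¬ covered H v) : IsMatching (F ∪ H) := by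
  refine ⟨fun e he => ?_, fun e he f hf hne v hve hvf => ?_⟩
  · exact (Finset.mem_union.1 he).elim (hF.1 e) (hH.1 e)
  · rcases Finset.mem_union.1 he with he | he <;> rcases Finset.mem_union.1 hf with hf | hf
    · exact hF.2 e he f hf hne v hve hvf
    · exact h v ⟨e, he, hve⟩ ⟨f, hf, hvf⟩
    · exact h v ⟨f, hf, hvf⟩ ⟨e, he, hve⟩
    · exact hH.2 e he f hf hne v hve hvf

theorem IsMatching.insert_of_not_covered [DecidableEq α] (hF : IsMatching F) (hg : ¬ g.IsDiag)
    (h : ∀ v ∈ g, ¬ covered F v) : IsMatching (insert g F) := by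
  rw [Finset.insert_eq]
  refine (isMatching_singleton hg).union hF fun v ⟨e, he, hve⟩ => h v ?_
  rwa [← Finset.mem_singleton.1 he]

theorem IsMatching.card_covered [Fintype α] (hF : IsMatching F) :
    #{v | covered F v} = 2 * #F := by
  have hbiUnion : ({v | covered F v} : Finset α) = F.biUnion Sym2.toFinset := by
    ext v
    rw [Finset.mem_filter]
    simp [covered]
  rw [hbiUnion, Finset.card_biUnion, Finset.sum_congr rfl fun e he =>
    Sym2.card_toFinset_of_not_isDiag e (hF.1 e he), Finset.sum_const, smul_eq_mul, mul_comm]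
  refine fun e he f hf hne => Finset.disjoint_left.2 fun v hve hvf => ?_
  exact hF.2 e he f hf hne v (Sym2.mem_toFinset.1 hve) (Sym2.mem_toFinset.1 hvf)

theorem IsMatching.two_mul_card_le [Fintype α] (hF : IsMatching F) :
    2 * #F ≤ Fintype.card α :=
  hF.card_covered ▸ Finset.card_le_univ _

theorem IsMatching.exists_superset_card_eq [Fintype α] (hF : IsMatching F) (hFk : #F ≤ k)
    (hk : 2 * k ≤ Fintype.card α) : ∃ F', IsMatching F' ∧ #F' = k ∧ F ⊆ F' := by
  induction k, hFk using Nat.le_induction with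
  | base => exact ⟨F, hF, rfl, Finset.Subset.rfl⟩
  | succ k _ ih =>
    obtain ⟨F', hF', rfl, hFF'⟩ := ih (by lia)
    have hcard : 1 < #{v | ¬ covered F' v} := by
      have hsum := Finset.card_filter_add_card_filter_not (s := .univ) (covered F')
      rw [hF'.card_covered, Finset.card_univ] at hsum
      lia
    obtain ⟨u, hu, v, hv, huv⟩ := Finset.one_lt_card.1 hcard
    rw [Finset.mem_filter_univ] at hu hv
    refine ⟨insert s(u, v) F', hF'.insert_of_not_covered (by simpa using huv) ?_,
      Finset.card_insert_of_notMem fun h => hu ⟨_, h, Sym2.mem_mk_left u v⟩,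
      hFF'.trans (Finset.subset_insert _ _)⟩
    rintro t ht
    rcases Sym2.mem_iff.1 ht with rfl | rfl
    exacts [hu, hv]

theorem ew_nonneg (hw : ∀ e, 0 ≤ w e) (F : Finset (Sym2 α)) : 0 ≤ ew w F :=
  Finset.sum_nonneg fun e _ => hw e

theorem ew_mono (hw : ∀ e, 0 ≤ w e) (h : F ⊆ H) : ew w F ≤ ew w H :=
  Finset.sum_le_sum_of_subset_of_nonneg h fun e _ _ => hw e

theorem IsMaxMatchingOfSize.ew_le [Finite α] (hM : IsMaxMatchingOfSize w k M)
    (hw : ∀ e, 0 ≤ w e) (hF : IsMatching F) (hFk : #F ≤ k) : ew w F ≤ ew w M := by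
  cases nonempty_fintype α
  obtain ⟨F', hF', hcard, hFF'⟩ := hF.exists_superset_card_eq hFk (hM.2.1 ▸ hM.1.two_mul_card_le)
  exact (ew_mono hw hFF').trans (hM.2.2 F' hF' hcard)

theorem isMiddle_mk {u v : α} :
    isMiddle M s(u, v) ↔ covered M u ∧ ¬ covered M v ∨ ¬ covered M u ∧ covered M v := by
  constructor
  · rintro ⟨a, b, h, ha, hb⟩
    rcases Sym2.eq_iff.1 h with ⟨rfl, rfl⟩ | ⟨rfl, rfl⟩
    exacts [Or.inl ⟨ha, hb⟩, Or.inr ⟨hb, ha⟩]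
  · rintro (⟨hu, hv⟩ | ⟨hu, hv⟩)
    exacts [⟨u, v, rfl, hu, hv⟩, ⟨v, u, Sym2.eq_swap, hv, hu⟩]

theorem shares_mk_iff_of_not_covered {u v : α} (he : e ∈ M) (hv : ¬ covered M v) :
    shares e s(u, v) ↔ u ∈ e := by
  refine ⟨fun ⟨t, hte, ht⟩ => ?_, fun hue => ⟨u, hue, Sym2.mem_mk_left u v⟩⟩
  rcases Sym2.mem_iff.1 ht with rfl | rfl
  exacts [hte, absurd ⟨e, he, hte⟩ hv]

theorem existsUnique_shares_of_isMiddle (hM : IsMatching M) (hg : isMiddle M g) :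
    ∃! e, e ∈ M ∧ shares e g := by
  obtain ⟨u, v, rfl, ⟨e, he, hue⟩, hv⟩ := hg
  refine ⟨e, ⟨he, u, hue, Sym2.mem_mk_left u v⟩, fun f ⟨hf, hs⟩ => ?_⟩
  exact hM.eq_of_mem hf he ((shares_mk_iff_of_not_covered hf hv).1 hs) hue

/-- Exchanging `e` for `g` yields another matching of the same size. -/
theorem IsMaxMatchingOfSize.le_of_shares (hM : IsMaxMatchingOfSize w k M) (he : e ∈ M)
    (hg : isMiddle M g) (hs : shares e g) : w g ≤ w e := by
  obtain ⟨u, v, rfl, hu, hv⟩ := hg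
  rw [shares_mk_iff_of_not_covered he hv] at hs
  have hnotMem : s(u, v) ∉ M.erase e :=
    fun h => hv ⟨_, Finset.mem_of_mem_erase h, Sym2.mem_mk_right u v⟩
  have hmatch : IsMatching (insert s(u, v) (M.erase e)) := by
    refine (hM.1.subset (Finset.erase_subset _ _)).insert_of_not_covered ?_ ?_
    · rw [Sym2.mk_isDiag_iff]
      rintro rfl
      exact hv hu
    · rintro t ht ⟨f, hf, htf⟩
      obtain ⟨hfe, hfM⟩ := Finset.mem_erase.1 hf
      rcases Sym2.mem_iff.1 ht with rfl | rfl
      exacts [hfe (hM.1.eq_of_mem hfM he htf hs), hv ⟨f, hfM, htf⟩]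
  have hle := hM.2.2 _ hmatch <| by
    rw [Finset.card_insert_of_notMem hnotMem, Finset.card_erase_add_one he, hM.2.1]
  rw [ew, Finset.sum_insert hnotMem, ew, ← Finset.add_sum_erase M w he] at hle
  exact le_of_add_le_add_right hle

theorem IsMaxMatchingOfSize.ew_filter_shares_le (hM : IsMaxMatchingOfSize w k M)
    (hH : ∀ g ∈ H, isMiddle M g) (he : e ∈ M) :
    ew w {g ∈ H | shares e g} ≤ #{g ∈ H | shares e g} * w e := by
  rw [← nsmul_eq_mul]
  refine Finset.sum_le_card_nsmul _ _ _ fun g hg => ?_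
  obtain ⟨hgH, hs⟩ := Finset.mem_filter.1 hg
  exact hM.le_of_shares he (hH g hgH) hs

theorem IsMatching.card_filter_shares_le_two (hH : IsMatching H) (e : Sym2 α) :
    #{h ∈ H | shares e h} ≤ 2 := by
  have : Nonempty α := e.inductionOn fun a _ => ⟨a⟩
  have hvertex : ∀ h ∈ H.filter (shares e), ∃ v, v ∈ e ∧ v ∈ h :=
    fun h hh => (Finset.mem_filter.1 hh).2
  choose! v hve hvh using hvertex
  calc #{h ∈ H | shares e h} ≤ #e.toFinset := by
        refine Finset.card_le_card_of_injOn v (fun h hh => Sym2.mem_toFinset.2 (hve h hh)) ?_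
        intro h hh h' hh' hvv'
        exact hH.eq_of_mem (Finset.mem_filter.1 hh).1 (Finset.mem_filter.1 hh').1 (hvh h hh)
          (hvv' ▸ hvh h' hh')
    _ ≤ 2 := by
        rw [Sym2.card_toFinset]
        split_ifs <;> lia

theorem sum_ew_filter_shares (h : ∀ g ∈ H, ∃! e, e ∈ M ∧ shares e g) :
    ∑ e ∈ M, ew w (H.filter (shares e)) = ew w H := by
  simp only [ew, Finset.sum_filter]
  rw [Finset.sum_comm]
  refine Finset.sum_congr rfl fun g hg => ?_
  obtain ⟨e, ⟨heM, heg⟩, hunique⟩ := h g hg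
  rw [Finset.sum_eq_single_of_mem e heM fun f hf hfe => if_neg fun hfg => hfe (hunique f ⟨hf, hfg⟩),
    if_pos heg]

theorem ew_filter_not_shares [DecidableEq α] {S : Finset (Sym2 α)} (hS : S ⊆ M)
    (h : ∀ g ∈ H, ∃! e, e ∈ M ∧ shares e g) :
    ew w {g ∈ H | ∀ e ∈ S, ¬ shares e g} = ∑ e ∈ M \ S, ew w {g ∈ H | shares e g} := by
  rw [← sum_ew_filter_shares (M := M \ S)]
  · refine Finset.sum_congr rfl fun e he => congrArg (ew w) ?_
    obtain ⟨heM, heS⟩ := Finset.mem_sdiff.1 he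
    rw [Finset.filter_filter]
    refine Finset.filter_congr fun g hg => and_iff_right_of_imp fun heg f hf hfg => heS ?_
    exact (h g hg).unique ⟨heM, heg⟩ ⟨hS hf, hfg⟩ ▸ hf
  · intro g hg
    obtain ⟨hgH, hgS⟩ := Finset.mem_filter.1 hg
    obtain ⟨e, ⟨heM, heg⟩, hunique⟩ := h g hgH
    exact ⟨e, ⟨Finset.mem_sdiff.2 ⟨heM, fun heS => hgS e heS heg⟩, heg⟩,
      fun f ⟨hf, hfg⟩ => hunique f ⟨(Finset.mem_sdiff.1 hf).1, hfg⟩⟩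

theorem sum_max_eq_sum_sdiff_add_sum_filter {ι : Type*} [DecidableEq ι] (s : Finset ι)
    (a b : ι → ℝ) : ∑ i ∈ s, max (a i) (b i) =
      ∑ i ∈ s \ {i ∈ s | b i ≤ a i}, b i + ∑ i ∈ s with b i ≤ a i, a i := by
  rw [← Finset.sum_sdiff (Finset.filter_subset (fun i => b i ≤ a i) s)]
  congr 1 <;> refine Finset.sum_congr rfl fun i hi => ?_
  · rw [Finset.mem_sdiff, Finset.mem_filter, not_and, not_le] at hi
    exact max_eq_right (hi.2 hi.1).le
  · exact max_eq_left (Finset.mem_filter.1 hi).2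

/-- Each edge `e` of `M` is exchanged for the edges of `H` it meets whenever these weigh more. -/
theorem IsMatching.exists_exchange [DecidableEq α] (hM : IsMatching M) (hFH : IsMatching (F ∪ H))
    (hF : ∀ v, covered F v → ¬ covered M v) (hH : ∀ g ∈ H, isMiddle M g) (w : Sym2 α → ℝ) :
    ∃ N, IsMatching N ∧
      ew w N = ew w F + ∑ e ∈ M, max (w e) (ew w {g ∈ H | shares e g}) := by
  set D : Sym2 α → ℝ := fun e => ew w {g ∈ H | shares e g}
  set S := {e ∈ M | D e ≤ w e}
  have hSM : S ⊆ M := Finset.filter_subset _ _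
  set K := {g ∈ H | ∀ e ∈ S, ¬ shares e g}
  have hKH : K ⊆ H := Finset.filter_subset _ _
  have hFK : Disjoint F K := by
    refine Finset.disjoint_left.2 fun g hgF hgK => ?_
    obtain ⟨u, v, rfl, hu, -⟩ := hH g (hKH hgK)
    exact hF u ⟨_, hgF, Sym2.mem_mk_left u v⟩ hu
  have hS : ∀ v, covered S v → ¬ covered (F ∪ K) v := by
    rintro v ⟨e, he, hve⟩ ⟨g, hg, hvg⟩
    rcases Finset.mem_union.1 hg with hg | hg
    · exact hF v ⟨g, hg, hvg⟩ ⟨e, hSM he, hve⟩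
    · exact (Finset.mem_filter.1 hg).2 e he ⟨v, hve, hvg⟩
  refine ⟨S ∪ (F ∪ K), (hM.subset hSM).union
    (hFH.subset (Finset.union_subset_union_right hKH)) hS, ?_⟩
  calc ew w (S ∪ (F ∪ K)) = ew w S + (ew w F + ew w K) := by
        simp only [ew]
        rw [Finset.sum_union (disjoint_of_not_covered hS), Finset.sum_union hFK]
    _ = ew w F + ∑ e ∈ M, max (w e) (D e) := by
        rw [ew_filter_not_shares hSM fun g hg => existsUnique_shares_of_isMiddle hM (hH g hg),
          sum_max_eq_sum_sdiff_add_sum_filter]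
        exact (add_comm _ _).trans (add_assoc _ _ _)

end Matching

/-! ### Vertex-disjoint 3-paths -/

section Paths

variable {α : Type*} {P : Finset (P3 α)} {c d : P3 α → Prop} {p q : P3 α}
  {e : Sym2 α} {v : α} {w : Sym2 α → ℝ} {g : P3 α → Sym2 α}

theorem P3.edge_ne (p : P3 α) : s(p.x, p.y) ≠ s(p.y, p.z) := by
  intro h
  rcases Sym2.eq_iff.1 h with ⟨h, -⟩ | ⟨h, -⟩
  exacts [p.hxy h, p.hxz h]

theorem weight_heavy (w : Sym2 α → ℝ) (p : P3 α) :
    w (heavy w p) = max (w s(p.x, p.y)) (w s(p.y, p.z)) := by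
  rw [heavy, apply_ite w, max_comm, max_def]

theorem mem_psel : p ∈ psel P c ↔ p ∈ P ∧ c p :=
  Finset.mem_filter

theorem pw_le_two_mul_maxSum (w : Sym2 α → ℝ) (P : Finset (P3 α)) :
    pw w P ≤ 2 * maxSum w P := by
  rw [pw, maxSum, Finset.mul_sum]
  refine Finset.sum_le_sum fun p _ => ?_
  rw [P3.wt, two_mul]
  exact add_le_add (le_max_left _ _) (le_max_right _ _)

variable [DecidableEq α]

theorem P3.mem_edges : e ∈ p.edges ↔ e = s(p.x, p.y) ∨ e = s(p.y, p.z) := by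
  simp [P3.edges]

theorem P3.mem_verts : v ∈ p.verts ↔ v = p.x ∨ v = p.y ∨ v = p.z := by
  simp [P3.verts]

theorem P3.mem_verts_of_mem_edges (he : e ∈ p.edges) (hv : v ∈ e) : v ∈ p.verts := by
  rw [P3.mem_verts]
  rcases P3.mem_edges.1 he with rfl | rfl <;> rcases Sym2.mem_iff.1 hv with rfl | rfl <;> simp

theorem P3.not_isDiag_of_mem_edges (he : e ∈ p.edges) : ¬ e.IsDiag := by
  rcases P3.mem_edges.1 he with rfl | rfl
  exacts [p.hxy, p.hyz]

theorem P3.ite_mem_edges (p : P3 α) (a : Prop) [Decidable a] :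
    (if a then s(p.x, p.y) else s(p.y, p.z)) ∈ p.edges := by
  rw [P3.mem_edges]
  exact (ite_eq_or_eq a _ _)

theorem P3.ite_mem_edges' (p : P3 α) (a : Prop) [Decidable a] :
    (if a then s(p.y, p.z) else s(p.x, p.y)) ∈ p.edges := by
  rw [P3.mem_edges]
  exact (ite_eq_or_eq a _ _).symm

theorem heavy_mem_edges (w : Sym2 α → ℝ) (p : P3 α) : heavy w p ∈ p.edges :=
  p.ite_mem_edges _

theorem le_max_of_mem_edges (he : e ∈ p.edges) :
    w e ≤ max (w s(p.x, p.y)) (w s(p.y, p.z)) := by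
  rcases P3.mem_edges.1 he with rfl | rfl
  exacts [le_max_left _ _, le_max_right _ _]

/-- A family of pairwise vertex-disjoint 3-paths; unlike a packing, it need not cover every
vertex. -/
def PairwiseDisj (P : Finset (P3 α)) : Prop :=
  ∀ p ∈ P, ∀ q ∈ P, p ≠ q → Disjoint p.verts q.verts

protected theorem PairwiseDisj.psel (hP : PairwiseDisj P) (c : P3 α → Prop) :
    PairwiseDisj (psel P c) :=
  fun p hp q hq => hP p (mem_psel.1 hp).1 q (mem_psel.1 hq).1

theorem PairwiseDisj.eq_of_mem (hP : PairwiseDisj P) (hp : p ∈ P) (hq : q ∈ P)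
    (hvp : v ∈ p.verts) (hvq : v ∈ q.verts) : p = q := by
  by_contra h
  exact Finset.disjoint_left.1 (hP p hp q hq h) hvp hvq

theorem PairwiseDisj.eq_of_mem_edges (hP : PairwiseDisj P) (hp : p ∈ P) (hq : q ∈ P)
    (hep : e ∈ p.edges) (heq : e ∈ q.edges) : p = q := by
  induction e with
  | _ a b =>
    exact hP.eq_of_mem hp hq (P3.mem_verts_of_mem_edges hep (Sym2.mem_mk_left a b))
      (P3.mem_verts_of_mem_edges heq (Sym2.mem_mk_left a b))

theorem PairwiseDisj.isMatching_image (hP : PairwiseDisj P) (hg : ∀ p ∈ P, g p ∈ p.edges) :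
    IsMatching (P.image g) := by
  refine ⟨fun e he => ?_, fun e he f hf hne v hve hvf => hne ?_⟩
  · obtain ⟨p, hp, rfl⟩ := Finset.mem_image.1 he
    exact P3.not_isDiag_of_mem_edges (hg p hp)
  · obtain ⟨p, hp, rfl⟩ := Finset.mem_image.1 he
    obtain ⟨q, hq, rfl⟩ := Finset.mem_image.1 hf
    rw [hP.eq_of_mem hp hq (P3.mem_verts_of_mem_edges (hg p hp) hve)
      (P3.mem_verts_of_mem_edges (hg q hq) hvf)]

theorem PairwiseDisj.ew_image (hP : PairwiseDisj P) (hg : ∀ p ∈ P, g p ∈ p.edges) :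
    ew w (P.image g) = ∑ p ∈ P, w (g p) :=
  Finset.sum_image fun p hp q hq h => hP.eq_of_mem_edges hp hq (hg p hp) (h ▸ hg q hq)

theorem PairwiseDisj.ew_image_heavy (hP : PairwiseDisj P) :
    ew w (P.image (heavy w)) = maxSum w P := by
  rw [hP.ew_image fun p _ => heavy_mem_edges w p]
  exact Finset.sum_congr rfl fun p _ => weight_heavy w p

theorem PairwiseDisj.ew_image_le_maxSum (hP : PairwiseDisj P) (hg : ∀ p ∈ P, g p ∈ p.edges) :
    ew w (P.image g) ≤ maxSum w P := by
  rw [hP.ew_image hg]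
  exact Finset.sum_le_sum fun p hp => le_max_of_mem_edges (hg p hp)

theorem PairwiseDisj.ew_Esub (hP : PairwiseDisj P) (w : Sym2 α → ℝ) :
    ew w (Esub P) = pw w P := by
  rw [ew, Esub, Finset.sum_biUnion]
  · exact Finset.sum_congr rfl fun p _ => Finset.sum_pair p.edge_ne
  · exact fun p hp q hq hne => Finset.disjoint_left.2 fun e hep heq =>
      hne (hP.eq_of_mem_edges hp hq hep heq)

theorem image_subset_Esub (hg : ∀ p ∈ P, g p ∈ p.edges) : P.image g ⊆ Esub P :=
  Finset.image_subset_iff.2 fun p hp => Finset.mem_biUnion.2 ⟨p, hp, hg p hp⟩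

theorem PairwiseDisj.ew_image_add_ew_sdiff (hP : PairwiseDisj P)
    (hg : ∀ p ∈ P, g p ∈ p.edges) (w : Sym2 α → ℝ) :
    ew w (P.image g) + ew w (Esub P \ P.image g) = pw w P := by
  rw [← hP.ew_Esub, add_comm]
  exact Finset.sum_sdiff (image_subset_Esub hg)

theorem PairwiseDisj.ew_sdiff_image_le_maxSum (hP : PairwiseDisj P)
    (hg : ∀ p ∈ P, g p ∈ p.edges) : ew w (Esub P \ P.image g) ≤ maxSum w P := by
  have hsum := hP.ew_image_add_ew_sdiff hg w
  rw [hP.ew_image hg] at hsum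
  have hle : pw w P ≤ ∑ p ∈ P, (w (g p) + max (w s(p.x, p.y)) (w s(p.y, p.z))) := by
    refine Finset.sum_le_sum fun p hp => ?_
    unfold P3.wt
    rcases P3.mem_edges.1 (hg p hp) with h | h <;> rw [h]
    · exact add_le_add_right (le_max_right _ _) _
    · exact (add_comm _ _).trans_le (add_le_add_right (le_max_left _ _) _)
  rw [Finset.sum_add_distrib, ← hsum] at hle
  exact le_of_add_le_add_left hle

theorem PairwiseDisj.mul_ew_image_add_mul_ew_sdiff_le (hP : PairwiseDisj P)
    (hw : ∀ e, 0 ≤ w e) (hg : ∀ p ∈ P, g p ∈ p.edges) {a b r : ℝ} (ha : 0 ≤ a) (hb : 0 ≤ b)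
    (hr : a + b ≤ r) :
    a * ew w (P.image g) + b * ew w (Esub P \ P.image g) ≤ r * maxSum w P :=
  calc
    _ ≤ a * maxSum w P + b * maxSum w P := by
      gcongr
      exacts [hP.ew_image_le_maxSum hg, hP.ew_sdiff_image_le_maxSum hg]
    _ = (a + b) * maxSum w P := (add_mul _ _ _).symm
    _ ≤ r * maxSum w P :=
      mul_le_mul_of_nonneg_right hr ((ew_nonneg hw _).trans_eq hP.ew_image_heavy)

theorem PairwiseDisj.disjoint_Esub_psel (hP : PairwiseDisj P) (hcd : ∀ p, c p → ¬ d p) :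
    Disjoint (Esub (psel P c)) (Esub (psel P d)) := by
  refine Finset.disjoint_left.2 fun e hec hed => ?_
  obtain ⟨p, hp, hep⟩ := Finset.mem_biUnion.1 hec
  obtain ⟨q, hq, heq⟩ := Finset.mem_biUnion.1 hed
  rw [mem_psel] at hp hq
  obtain rfl := hP.eq_of_mem_edges hp.1 hq.1 hep heq
  exact hcd p hp.2 hq.2

end Paths

/-! ### The eight classes -/

section Classes

variable {α : Type*} {P : Finset (P3 α)} {M : Finset (Sym2 α)} {p : P3 α}
  {e g : Sym2 α} {c d : P3 α → Prop} {w : Sym2 α → ℝ}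

theorem IsMatching.not_both_edges_mem (hM : IsMatching M) (p : P3 α) :
    ¬ (s(p.x, p.y) ∈ M ∧ s(p.y, p.z) ∈ M) := fun h =>
  p.edge_ne (hM.eq_of_mem h.1 h.2 (Sym2.mem_mk_right _ _) (Sym2.mem_mk_left _ _))

theorem sum_psel_or (hcd : ∀ p, c p → ¬ d p) (f : P3 α → ℝ) :
    ∑ p ∈ psel P (fun p => c p ∨ d p), f p = ∑ p ∈ psel P c, f p + ∑ p ∈ psel P d, f p := by
  unfold psel
  rw [← Finset.sum_union (Finset.disjoint_filter.2 fun p _ => hcd p)]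
  exact Finset.sum_congr (by ext; simp [and_or_left]) fun _ _ => rfl

variable [DecidableEq α]

theorem kcnt_eq (M : Finset (Sym2 α)) (p : P3 α) :
    kcnt M p = (if covered M p.x then 1 else 0) + (if covered M p.y then 1 else 0) +
      (if covered M p.z then 1 else 0) := by
  rw [kcnt, P3.verts, Finset.card_filter, Finset.sum_insert (by simp [p.hxy, p.hxz]),
    Finset.sum_insert (by simp [p.hyz]), Finset.sum_singleton, add_assoc]

theorem cls1_iff : cls1 M p ↔ ¬ covered M p.x ∧ ¬ covered M p.y ∧ ¬ covered M p.z := by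
  rw [cls1, kcnt_eq]
  split_ifs <;> simp_all

theorem cls2_iff :
    cls2 M p ↔ ¬ covered M p.y ∧ (covered M p.x ∧ ¬ covered M p.z ∨
      ¬ covered M p.x ∧ covered M p.z) := by
  rw [cls2, kcnt_eq]
  split_ifs <;> simp_all

theorem cls3_iff : cls3 M p ↔ ¬ covered M p.x ∧ covered M p.y ∧ ¬ covered M p.z := by
  rw [cls3, kcnt_eq]
  split_ifs <;> simp_all

theorem cls4_iff : cls4 M p ↔ covered M p.x ∧ ¬ covered M p.y ∧ covered M p.z := by
  rw [cls4, kcnt_eq]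
  split_ifs <;> simp_all

theorem cls5_iff :
    cls5 M p ↔ covered M p.y ∧ (covered M p.x ∧ ¬ covered M p.z ∨
      ¬ covered M p.x ∧ covered M p.z) ∧ exOne M p := by
  rw [cls5, kcnt_eq]
  split_ifs <;> simp_all

theorem cls6_iff :
    cls6 M p ↔ covered M p.y ∧ (covered M p.x ∧ ¬ covered M p.z ∨
      ¬ covered M p.x ∧ covered M p.z) ∧ s(p.x, p.y) ∉ M ∧ s(p.y, p.z) ∉ M := by
  rw [cls6, kcnt_eq]
  split_ifs <;> simp_all

theorem sum_eq_sum_classes (hM : IsMatching M) (P : Finset (P3 α)) (f : P3 α → ℝ) :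
    ∑ p ∈ P, f p = ∑ p ∈ psel P (cls1 M), f p + ∑ p ∈ psel P (cls2 M), f p +
      ∑ p ∈ psel P (cls3 M), f p + ∑ p ∈ psel P (cls4 M), f p + ∑ p ∈ psel P (cls5 M), f p +
      ∑ p ∈ psel P (cls6 M), f p + ∑ p ∈ psel P (cls7 M), f p + ∑ p ∈ psel P (cls8 M), f p := by
  simp only [psel, Finset.sum_filter, ← Finset.sum_add_distrib]
  refine Finset.sum_congr rfl fun p _ => ?_
  have hboth := hM.not_both_edges_mem p
  simp only [cls1, cls2, cls3, cls4, cls5, cls6, cls7, cls8, exOne, kcnt_eq]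
  by_cases hx : covered M p.x <;> by_cases hy : covered M p.y <;> by_cases hz : covered M p.z <;>
  by_cases hxy : s(p.x, p.y) ∈ M <;> by_cases hyz : s(p.y, p.z) ∈ M <;>
  simp_all

theorem maxSum_psel_cls7_or_cls8 (w : Sym2 α → ℝ) (P : Finset (P3 α)) (M : Finset (Sym2 α)) :
    maxSum w (psel P fun p => cls7 M p ∨ cls8 M p) =
      maxSum w (psel P (cls7 M)) + maxSum w (psel P (cls8 M)) :=
  sum_psel_or (fun _ h7 h8 => h7.2.elim (fun h => h8.2.1 h.1) fun h => h8.2.2 h.2) _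

/-- The edge of `Y_2` in a 3-path of `P*_2` and the edge of `X_6` in a 3-path of `P*_6`: in a
3-path with exactly one covered endpoint, the edge at the other endpoint. -/
noncomputable def oppEdge (M : Finset (Sym2 α)) (p : P3 α) : Sym2 α :=
  if covered M p.x then s(p.y, p.z) else s(p.x, p.y)

theorem oppEdge_mem_edges (M : Finset (Sym2 α)) (p : P3 α) : oppEdge M p ∈ p.edges :=
  p.ite_mem_edges' _

theorem Y2_subset_image_oppEdge : Y2 P M ⊆ (psel P (cls2 M)).image (oppEdge M) := by
  intro e he
  rw [Y2, X2, Finset.mem_sdiff, Esub, Finset.mem_biUnion] at he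
  obtain ⟨⟨p, hp, hep⟩, hnotMem⟩ := he
  refine Finset.mem_image.2 ⟨p, hp, ?_⟩
  contrapose! hnotMem
  refine Finset.mem_image.2 ⟨p, hp, ?_⟩
  unfold oppEdge at hnotMem
  rcases P3.mem_edges.1 hep with rfl | rfl <;> split_ifs at hnotMem ⊢ <;> tauto

theorem isMiddle_iff_eq_oppEdge (h : cls6 M p) (he : e ∈ p.edges) :
    isMiddle M e ↔ e = oppEdge M p := by
  have hne := p.edge_ne
  rw [cls6_iff] at h
  unfold oppEdge
  rcases P3.mem_edges.1 he with rfl | rfl <;> rw [isMiddle_mk] <;> split_ifs <;> simp_all [Ne.symm]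

theorem mid6_eq_X6 (P : Finset (P3 α)) (M : Finset (Sym2 α)) : mid6 P M = X6 P M := by
  ext e
  rw [mid6, X6, Finset.mem_filter, Esub, Finset.mem_biUnion, Finset.mem_image]
  constructor
  · rintro ⟨⟨p, hp, hep⟩, he⟩
    exact ⟨p, hp, ((isMiddle_iff_eq_oppEdge (mem_psel.1 hp).2 hep).1 he).symm⟩
  · rintro ⟨p, hp, rfl⟩
    have hep := oppEdge_mem_edges M p
    exact ⟨⟨p, hp, hep⟩, (isMiddle_iff_eq_oppEdge (mem_psel.1 hp).2 hep).2 rfl⟩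

theorem isMiddle_of_mem_X6 (hg : g ∈ X6 P M) : isMiddle M g :=
  (Finset.mem_filter.1 (mid6_eq_X6 P M ▸ hg)).2

theorem exists_path_of_mem_X3_union_X4 (hg : g ∈ X3 w P M ∪ X4 w P M) :
    ∃ p ∈ P, (cls3 M p ∨ cls4 M p) ∧ g ∈ p.edges := by
  rcases Finset.mem_union.1 hg with hg | hg <;> obtain ⟨p, hp, rfl⟩ := Finset.mem_image.1 hg
  · exact ⟨p, (mem_psel.1 hp).1, .inl (mem_psel.1 hp).2, heavy_mem_edges w p⟩
  · exact ⟨p, (mem_psel.1 hp).1, .inr (mem_psel.1 hp).2, heavy_mem_edges w p⟩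

theorem isMiddle_of_cls3_or_cls4 (h : cls3 M p ∨ cls4 M p) (he : e ∈ p.edges) :
    isMiddle M e := by
  rw [cls3_iff, cls4_iff] at h
  rcases P3.mem_edges.1 he with rfl | rfl <;> rw [isMiddle_mk] <;> tauto

theorem middleIn_P234_of_mem_X3_union_X4 (hg : g ∈ X3 w P M ∪ X4 w P M) :
    middleIn M (P234 P M) g := by
  obtain ⟨p, hp, h, hgp⟩ := exists_path_of_mem_X3_union_X4 hg
  exact ⟨⟨p, mem_psel.2 ⟨hp, .inr h⟩, hgp⟩, isMiddle_of_cls3_or_cls4 h hgp⟩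

theorem not_covered_of_covered_X1_union_Y2 {v : α} (hv : covered (X1 w P M ∪ Y2 P M) v) :
    ¬ covered M v := by
  obtain ⟨g, hg, hvg⟩ := hv
  rcases Finset.mem_union.1 hg with hg | hg
  · obtain ⟨p, hp, rfl⟩ := Finset.mem_image.1 hg
    have h := cls1_iff.1 (mem_psel.1 hp).2
    rcases P3.mem_verts.1 (P3.mem_verts_of_mem_edges (heavy_mem_edges w p) hvg) with
      rfl | rfl | rfl
    exacts [h.1, h.2.1, h.2.2]
  · obtain ⟨p, hp, rfl⟩ := Finset.mem_image.1 (Y2_subset_image_oppEdge hg)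
    have h := cls2_iff.1 (mem_psel.1 hp).2
    unfold oppEdge at hvg
    split_ifs at hvg <;> rcases Sym2.mem_iff.1 hvg with rfl | rfl <;> tauto

theorem Esub_sdiff_subset_inter {Q : Finset (P3 α)} (hQ : ∀ p ∈ Q, exOne M p) :
    Esub Q \ Q.image (fun p => if s(p.x, p.y) ∈ M then s(p.y, p.z) else s(p.x, p.y)) ⊆
      M ∩ Esub Q := by
  intro e he
  obtain ⟨he, hnotMem⟩ := Finset.mem_sdiff.1 he
  refine Finset.mem_inter.2 ⟨?_, he⟩
  obtain ⟨p, hp, hep⟩ := Finset.mem_biUnion.1 he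
  contrapose! hnotMem
  refine Finset.mem_image.2 ⟨p, hp, ?_⟩
  rcases hQ p hp with h | h <;> rcases P3.mem_edges.1 hep with rfl | rfl <;> simp_all

theorem Y5_subset_Mset4 : Y5 P M ⊆ Mset4 P M :=
  Esub_sdiff_subset_inter fun _ hp => (mem_psel.1 hp).2.2.2

theorem Y7_subset_Mset3 : Y7 P M ⊆ Mset3 P M :=
  Esub_sdiff_subset_inter fun _ hp => (mem_psel.1 hp).2.2

theorem PairwiseDisj.isMatching_X1_union_Y2_union_X3_union_X4_union_X6 (hP : PairwiseDisj P)
    (w : Sym2 α → ℝ) (M : Finset (Sym2 α)) :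
    IsMatching (X1 w P M ∪ Y2 P M ∪ (X3 w P M ∪ X4 w P M) ∪ X6 P M) := by
  set f : P3 α → Sym2 α := fun p => if cls2 M p ∨ cls6 M p then oppEdge M p else heavy w p
    with hf
  have hfE : ∀ p ∈ P, f p ∈ p.edges := by
    intro p _
    simp only [hf]
    split_ifs
    exacts [oppEdge_mem_edges M p, heavy_mem_edges w p]
  have hsub : ∀ (c : P3 α → Prop) (g : P3 α → Sym2 α), (∀ p, c p → f p = g p) →
      (psel P c).image g ⊆ P.image f := fun c g hg => Finset.image_subset_iff.2 fun p hp =>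
    Finset.mem_image.2 ⟨p, (mem_psel.1 hp).1, hg p (mem_psel.1 hp).2⟩
  have hheavy : ∀ p, cls1 M p ∨ cls3 M p ∨ cls4 M p → f p = heavy w p := by
    intro p h
    refine if_neg ?_
    rw [cls1_iff, cls3_iff, cls4_iff] at h
    rw [cls2_iff, cls6_iff]
    tauto
  refine (hP.isMatching_image hfE).subset (Finset.union_subset (Finset.union_subset
    (Finset.union_subset ?_ ?_) (Finset.union_subset ?_ ?_)) ?_)
  · exact hsub _ _ fun p h => hheavy p (.inl h)
  · exact Y2_subset_image_oppEdge.trans (hsub _ _ fun p h => if_pos (.inl h))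
  · exact hsub _ _ fun p h => hheavy p (.inr (.inl h))
  · exact hsub _ _ fun p h => hheavy p (.inr (.inr h))
  · exact hsub _ _ fun p h => if_pos (.inr h)

end Classes

/-! ### Lower bounds for the two matchings -/

section Bounds

variable {α : Type*} [DecidableEq α] {P : Finset (P3 α)} {M N : Finset (Sym2 α)} {p : P3 α}
  {e g : Sym2 α} {w : Sym2 α → ℝ} {k : ℕ}

theorem PairwiseDisj.ew_X1_union_Y2 (hP : PairwiseDisj P) :
    ew w (X1 w P M ∪ Y2 P M) = ew w (X1 w P M) + ew w (Y2 P M) := by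
  refine Finset.sum_union ((hP.disjoint_Esub_psel fun p => ?_).mono
    (image_subset_Esub fun p _ => heavy_mem_edges w p) Finset.sdiff_subset)
  rw [cls1_iff, cls2_iff]
  tauto

theorem PairwiseDisj.ew_X3_union_X4 (hP : PairwiseDisj P) :
    ew w (X3 w P M ∪ X4 w P M) = ew w (X3 w P M) + ew w (X4 w P M) := by
  refine Finset.sum_union ((hP.disjoint_Esub_psel fun p => ?_).mono
    (image_subset_Esub fun p _ => heavy_mem_edges w p)
    (image_subset_Esub fun p _ => heavy_mem_edges w p))
  rw [cls3_iff, cls4_iff]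
  tauto

theorem PairwiseDisj.maxSum_le_ew [Finite α] (hP : PairwiseDisj P) (hPk : #P ≤ k)
    (hw : ∀ e, 0 ≤ w e) (hM : IsMaxMatchingOfSize w k M) : maxSum w P ≤ ew w M := by
  rw [← hP.ew_image_heavy]
  exact hM.ew_le hw (hP.isMatching_image fun p _ => heavy_mem_edges w p)
    (Finset.card_image_le.trans hPk)

theorem ew_X1_add_ew_Y2_add_sum_max_le [Fintype α] (hw : ∀ e, 0 ≤ w e) (hP : PairwiseDisj P)
    (hM : IsMatching M) (hN : IsMaxMatchingOfSize w (Fintype.card α / 2) N) :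
    ew w (X1 w P M) + ew w (Y2 P M) +
      ∑ e ∈ M, max (w e) (ew w {g ∈ X3 w P M ∪ X4 w P M | shares e g}) ≤ ew w N := by
  obtain ⟨N', hN', hew⟩ := hM.exists_exchange
    ((hP.isMatching_X1_union_Y2_union_X3_union_X4_union_X6 w M).subset
      Finset.subset_union_left)
    (fun v => not_covered_of_covered_X1_union_Y2)
    (fun g hg => (middleIn_P234_of_mem_X3_union_X4 hg).2) w
  rw [← hP.ew_X1_union_Y2, ← hew]
  refine hN.ew_le hw hN' ?_
  rw [Nat.le_div_iff_mul_le two_pos, mul_comm]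
  exact hN'.two_mul_card_le

theorem PairwiseDisj.disjoint_X6_X3_union_X4 (hP : PairwiseDisj P) :
    Disjoint (X6 P M) (X3 w P M ∪ X4 w P M) := by
  refine Finset.disjoint_union_right.2 ⟨?_, ?_⟩ <;>
    refine (hP.disjoint_Esub_psel fun p => ?_).mono
      (image_subset_Esub fun p _ => oppEdge_mem_edges M p)
      (image_subset_Esub fun p _ => heavy_mem_edges w p)
  · rw [cls6_iff, cls3_iff]
    tauto
  · rw [cls6_iff, cls4_iff]
    tauto

theorem card_filter_X6_add_card_filter_X3_union_X4_le_two (hP : PairwiseDisj P)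
    (M : Finset (Sym2 α)) (w : Sym2 α → ℝ) (e : Sym2 α) :
    #{g ∈ X6 P M | shares e g} + #{g ∈ X3 w P M ∪ X4 w P M | shares e g} ≤ 2 := by
  have hmatch : IsMatching (X6 P M ∪ (X3 w P M ∪ X4 w P M)) := by
    refine (hP.isMatching_X1_union_Y2_union_X3_union_X4_union_X6 w M).subset ?_
    rw [Finset.union_comm]
    exact Finset.union_subset_union_left Finset.subset_union_right
  rw [← Finset.card_union_of_disjoint (hP.disjoint_X6_X3_union_X4.mono
    (Finset.filter_subset _ _) (Finset.filter_subset _ _)), ← Finset.filter_union]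
  exact hmatch.card_filter_shares_le_two e

theorem cls_of_isMiddle (hg : g ∈ p.edges) (hmid : isMiddle M g) :
    cls5 M p ∨ cls6 M p ∨ cls2 M p ∨ cls3 M p ∨ cls4 M p := by
  have hxy : s(p.x, p.y) ∈ M → covered M p.x ∧ covered M p.y :=
    fun h => ⟨⟨_, h, Sym2.mem_mk_left _ _⟩, ⟨_, h, Sym2.mem_mk_right _ _⟩⟩
  have hyz : s(p.y, p.z) ∈ M → covered M p.y ∧ covered M p.z :=
    fun h => ⟨⟨_, h, Sym2.mem_mk_left _ _⟩, ⟨_, h, Sym2.mem_mk_right _ _⟩⟩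
  simp only [cls2_iff, cls3_iff, cls4_iff, cls5_iff, cls6_iff, exOne]
  rcases P3.mem_edges.1 hg with rfl | rfl <;> rw [isMiddle_mk] at hmid <;>
  by_cases hx : covered M p.x <;> by_cases hy : covered M p.y <;> by_cases hz : covered M p.z <;>
  simp_all [em]

theorem mem_edges_of_cls5 (hM : IsMatching M) (hp : cls5 M p) (hg : g ∈ p.edges)
    (hmid : isMiddle M g) (he : e ∈ M) (hs : shares e g) : e ∈ p.edges := by
  obtain ⟨f, hf, hfp⟩ : ∃ f ∈ M, f ∈ p.edges := by
    rcases hp.2.2 with h | h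
    exacts [⟨_, h.1, P3.mem_edges.2 (.inl rfl)⟩, ⟨_, h.2, P3.mem_edges.2 (.inr rfl)⟩]
  have hfg : shares f g := by
    refine ⟨p.y, ?_, ?_⟩
    · rcases P3.mem_edges.1 hfp with rfl | rfl <;> simp
    · rcases P3.mem_edges.1 hg with rfl | rfl <;> simp
  rwa [(existsUnique_shares_of_isMiddle hM hmid).unique ⟨he, hs⟩ ⟨hf, hfg⟩]

variable [Fintype α]

theorem mem_Mset1_of_shares (he : e ∈ M) (hg : g ∈ X6 P M) (hs : shares e g) : e ∈ Mset1 P M := by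
  obtain ⟨p, hp, hgp⟩ := Finset.mem_image.1 hg
  exact Finset.mem_filter.2 ⟨he, g, ⟨⟨p, hp, hgp ▸ oppEdge_mem_edges M p⟩,
    isMiddle_of_mem_X6 hg⟩, hs⟩

theorem mem_Mset2_of_shares (hP : PairwiseDisj P) (hM : IsMatching M) (he : e ∈ M)
    (hg : g ∈ X3 w P M ∪ X4 w P M) (hs : shares e g) (hX6 : ∀ f ∈ X6 P M, ¬ shares e f) :
    e ∈ Mset2 P M := by
  obtain ⟨p, hp, hp34, hgp⟩ := exists_path_of_mem_X3_union_X4 hg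
  refine Finset.mem_filter.2 ⟨he, ⟨g, ⟨⟨p, hp, hgp⟩, isMiddle_of_cls3_or_cls4 hp34 hgp⟩, hs⟩, ?_⟩
  rintro f ⟨⟨q, hq, hfq⟩, hf⟩ hsf
  refine ⟨⟨q, mem_psel.2 ⟨hq, ?_⟩, hfq⟩, hf⟩
  rcases cls_of_isMiddle hfq hf with h5 | h6 | h
  · obtain ⟨v, hve, hvg⟩ := hs
    obtain rfl := hP.eq_of_mem hp hq (P3.mem_verts_of_mem_edges hgp hvg)
      (P3.mem_verts_of_mem_edges (mem_edges_of_cls5 hM h5 hfq hf he hsf) hve)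
    exact .inr hp34
  · refine absurd hsf (hX6 f ?_)
    rw [(isMiddle_iff_eq_oppEdge h6 hfq).1 hf]
    exact Finset.mem_image_of_mem _ (mem_psel.2 ⟨hq, h6⟩)
  · exact h

/-- The amount with which an edge `e` of `M` is counted in `B2` through the sets `M'_1`, `M''_1`,
`M'''_1` and `M_2`. -/
noncomputable def credit (w : Sym2 α → ℝ) (P : Finset (P3 α)) (M : Finset (Sym2 α))
    (e : Sym2 α) : ℝ :=
  (1 / 12 : ℝ) * (if e ∈ Mset1' P M then w e else 0) +
    (1 / 6 : ℝ) * (if e ∈ Mset1'' P M then w e else 0) +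
    (1 / 4 : ℝ) * (if e ∈ Mset1''' P M then w e else 0) +
    (1 / 6 : ℝ) * (if e ∈ Mset2 P M then w e else 0)

theorem sum_credit (w : Sym2 α → ℝ) (P : Finset (P3 α)) (M : Finset (Sym2 α)) :
    ∑ e ∈ M, credit w P M e = (1 / 12 : ℝ) * ew w (Mset1' P M) +
      (1 / 6 : ℝ) * ew w (Mset1'' P M) + (1 / 4 : ℝ) * ew w (Mset1''' P M) +
      (1 / 6 : ℝ) * ew w (Mset2 P M) := by
  have hsum : ∀ F ⊆ M, ∑ e ∈ M, (if e ∈ F then w e else 0) = ew w F := fun F hF => by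
    rw [Finset.sum_ite_mem, Finset.inter_eq_right.2 hF, ew]
  have h1 : Mset1 P M ⊆ M := Finset.filter_subset _ _
  simp only [credit, Finset.sum_add_distrib, ← Finset.mul_sum]
  rw [hsum (Mset1' P M) ((Finset.filter_subset _ _).trans h1),
    hsum (Mset1'' P M) ((Finset.filter_subset _ _).trans h1),
    hsum (Mset1''' P M) ((Finset.filter_subset _ _).trans h1),
    hsum (Mset2 P M) (Finset.filter_subset _ _)]

theorem credit_nonneg (hw : ∀ e, 0 ≤ w e) : 0 ≤ credit w P M e := by
  have he := hw e
  unfold credit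
  positivity

theorem mul_le_credit_of_mem_Mset1' (hw : ∀ e, 0 ≤ w e) (h : e ∈ Mset1' P M) :
    1 / 12 * w e ≤ credit w P M e := by
  have he := hw e
  unfold credit
  split_ifs <;> linarith

theorem mul_le_credit_of_mem_Mset1'' (hw : ∀ e, 0 ≤ w e) (h : e ∈ Mset1'' P M) :
    1 / 6 * w e ≤ credit w P M e := by
  have he := hw e
  unfold credit
  split_ifs <;> linarith

theorem mul_le_credit_of_mem_Mset1''' (hw : ∀ e, 0 ≤ w e) (h : e ∈ Mset1''' P M) :
    1 / 4 * w e ≤ credit w P M e := by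
  have he := hw e
  unfold credit
  split_ifs <;> linarith

theorem mul_le_credit_of_mem_Mset2 (hw : ∀ e, 0 ≤ w e) (h : e ∈ Mset2 P M) :
    1 / 6 * w e ≤ credit w P M e := by
  have he := hw e
  unfold credit
  split_ifs <;> linarith

theorem le_credit (hw : ∀ e, 0 ≤ w e) (hP : PairwiseDisj P) (hM : IsMaxMatchingOfSize w k M)
    (he : e ∈ M) :
    1 / 12 * ew w {g ∈ X6 P M | shares e g} +
      1 / 6 * min (w e) (ew w {g ∈ X3 w P M ∪ X4 w P M | shares e g}) ≤ credit w P M e := by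
  have hX6_le := hM.ew_filter_shares_le (fun g => isMiddle_of_mem_X6 (P := P)) he
  have hcard := card_filter_X6_add_card_filter_X3_union_X4_le_two hP M w e
  set A := {g ∈ X6 P M | shares e g}
  set B := {g ∈ X3 w P M ∪ X4 w P M | shares e g}
  have hmin : min (w e) (ew w B) ≤ w e := min_le_left _ _
  have hmin_empty (h : B = ∅) : min (w e) (ew w B) = 0 := by
    rw [h]
    exact min_eq_right (hw e)
  have hmem_Mset1 (h : 0 < #A) : e ∈ Mset1 P M := by
    obtain ⟨g, hg⟩ := Finset.card_pos.1 h
    exact mem_Mset1_of_shares he (Finset.mem_filter.1 hg).1 (Finset.mem_filter.1 hg).2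
  obtain hcardA | hcardA | hcardA : #A = 0 ∨ #A = 1 ∨ #A = 2 := by lia
  all_goals rw [hcardA] at hX6_le; push_cast at hX6_le
  · rcases B.eq_empty_or_nonempty with hB_empty | ⟨g, hg⟩
    · linarith [hmin_empty hB_empty, credit_nonneg (P := P) (M := M) (e := e) hw]
    · obtain ⟨hgX, hs⟩ := Finset.mem_filter.1 hg
      have hmem := mem_Mset2_of_shares hP hM.1 he hgX hs
        (Finset.filter_eq_empty_iff.1 (Finset.card_eq_zero.1 hcardA))
      linarith [mul_le_credit_of_mem_Mset2 hw hmem]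
  · by_cases hex : ∃ g, middleIn M (P234 P M) g ∧ shares e g
    · have hmem : e ∈ Mset1''' P M :=
        Finset.mem_filter.2 ⟨hmem_Mset1 (by lia), mid6_eq_X6 P M ▸ hcardA, hex⟩
      linarith [mul_le_credit_of_mem_Mset1''' hw hmem]
    · push Not at hex
      have hmem : e ∈ Mset1' P M :=
        Finset.mem_filter.2 ⟨hmem_Mset1 (by lia), mid6_eq_X6 P M ▸ hcardA, hex⟩
      have hB_empty : B = ∅ := Finset.filter_eq_empty_iff.2 fun g hg =>
        hex g (middleIn_P234_of_mem_X3_union_X4 hg)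
      linarith [hmin_empty hB_empty, mul_le_credit_of_mem_Mset1' hw hmem]
  · have hmem : e ∈ Mset1'' P M :=
      Finset.mem_filter.2 ⟨hmem_Mset1 (by lia), mid6_eq_X6 P M ▸ hcardA⟩
    have hB_empty : B = ∅ := Finset.card_eq_zero.1 (by lia)
    linarith [hmin_empty hB_empty, mul_le_credit_of_mem_Mset1'' hw hmem]

theorem ew_X6_add_ew_X3_add_ew_X4_add_ew_le (hw : ∀ e, 0 ≤ w e) (hP : PairwiseDisj P)
    (hM : IsMaxMatchingOfSize w k M) :
    1 / 12 * ew w (X6 P M) + 1 / 6 * (ew w (X3 w P M) + ew w (X4 w P M)) + 1 / 6 * ew w M ≤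
      ∑ e ∈ M, credit w P M e +
        1 / 6 * ∑ e ∈ M, max (w e) (ew w {g ∈ X3 w P M ∪ X4 w P M | shares e g}) := by
  rw [← hP.ew_X3_union_X4,
    ← sum_ew_filter_shares fun g hg => existsUnique_shares_of_isMiddle hM.1 (isMiddle_of_mem_X6 hg),
    ← sum_ew_filter_shares fun g hg => existsUnique_shares_of_isMiddle hM.1
      (middleIn_P234_of_mem_X3_union_X4 hg).2,
    ew]
  simp only [Finset.mul_sum, ← Finset.sum_add_distrib]
  refine Finset.sum_le_sum fun e he => ?_
  have hcredit := le_credit hw hP hM he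
  have hminmax := min_add_max (w e) (ew w {g ∈ X3 w P M ∪ X4 w P M | shares e g})
  linarith

end Bounds

/-! ### Combining the three bounds -/

section Combination

variable {α : Type*} [DecidableEq α] {P : Finset (P3 α)} {M N : Finset (Sym2 α)}
  {w : Sym2 α → ℝ} {k : ℕ}

theorem six_mul_pw_le (hw : ∀ e, 0 ≤ w e) (hP : PairwiseDisj P) (hM : IsMatching M) :
    6 * pw w P ≤ 20 / 3 * maxSum w P +
      16 / 3 * (ew w (X1 w P M) + ew w (Y2 P M) + ew w (X3 w P M) + ew w (X4 w P M)) +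
      4 * ew w (X2 P M) +
      (8 * ew w (X5 P M) + 32 / 9 * ew w (Y5 P M)) +
      (2 * ew w (Esub (psel P (cls6 M))) + 2 / 3 * ew w (X6 P M) + 8 / 9 * ew w (Y6 P M)) +
      (4 * ew w (X7 P M) + 4 / 9 * (ew w (Esub (psel P (cls7 M))) +
        maxSum w (psel P (cls7 M)))) +
      (2 * ew w (Esub (psel P (cls8 M))) + 4 / 9 * (ew w (Esub (psel P (cls8 M))) +
        maxSum w (psel P (cls8 M)))) := by
  have hheavy (c : P3 α → Prop) : ew w ((psel P c).image (heavy w)) = maxSum w (psel P c) :=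
    (hP.psel c).ew_image_heavy
  have hX1 : ew w (X1 w P M) = _ := hheavy (cls1 M)
  have hX3 : ew w (X3 w P M) = _ := hheavy (cls3 M)
  have hX4 : ew w (X4 w P M) = _ := hheavy (cls4 M)
  have hle (c : P3 α → Prop) := pw_le_two_mul_maxSum w (psel P c)
  -- The coefficients in each class are what its terms on the right-hand side leave over.
  have hsum2 : ew w (X2 P M) + ew w (Y2 P M) = pw w (psel P (cls2 M)) :=
    (hP.psel _).ew_image_add_ew_sdiff (fun p _ => p.ite_mem_edges _) w
  have hle2 : 2 * ew w (X2 P M) + 2 / 3 * ew w (Y2 P M) ≤ 20 / 3 * maxSum w (psel P (cls2 M)) :=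
    (hP.psel _).mul_ew_image_add_mul_ew_sdiff_le hw (fun p _ => p.ite_mem_edges _)
      (by norm_num) (by norm_num) (by norm_num)
  have hsum5 : ew w (X5 P M) + ew w (Y5 P M) = pw w (psel P (cls5 M)) :=
    (hP.psel _).ew_image_add_ew_sdiff (fun p _ => p.ite_mem_edges' _) w
  have hle5 : 0 * ew w (X5 P M) + 22 / 9 * ew w (Y5 P M) ≤ 20 / 3 * maxSum w (psel P (cls5 M)) :=
    (hP.psel _).mul_ew_image_add_mul_ew_sdiff_le hw (fun p _ => p.ite_mem_edges' _)
      (by norm_num) (by norm_num) (by norm_num)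
  have hsum6 : ew w (X6 P M) + ew w (Y6 P M) = pw w (psel P (cls6 M)) :=
    (hP.psel _).ew_image_add_ew_sdiff (fun p _ => p.ite_mem_edges' _) w
  have hle6 : 10 / 3 * ew w (X6 P M) + 28 / 9 * ew w (Y6 P M) ≤
      20 / 3 * maxSum w (psel P (cls6 M)) :=
    (hP.psel _).mul_ew_image_add_mul_ew_sdiff_le hw (fun p _ => p.ite_mem_edges' _)
      (by norm_num) (by norm_num) (by norm_num)
  have hsum7 : ew w (X7 P M) + ew w (Y7 P M) = pw w (psel P (cls7 M)) :=
    (hP.psel _).ew_image_add_ew_sdiff (fun p _ => p.ite_mem_edges' _) w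
  have hle7 : 14 / 9 * ew w (X7 P M) + 50 / 9 * ew w (Y7 P M) ≤
      64 / 9 * maxSum w (psel P (cls7 M)) :=
    (hP.psel _).mul_ew_image_add_mul_ew_sdiff_le hw (fun p _ => p.ite_mem_edges' _)
      (by norm_num) (by norm_num) (by norm_num)
  have hpw := sum_eq_sum_classes hM P (P3.wt w)
  have hmaxSum := sum_eq_sum_classes hM P fun p => max (w s(p.x, p.y)) (w s(p.y, p.z))
  simp only [← pw.eq_def] at hpw
  simp only [← maxSum.eq_def] at hmaxSum
  rw [(hP.psel (cls6 M)).ew_Esub, (hP.psel (cls7 M)).ew_Esub, (hP.psel (cls8 M)).ew_Esub]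
  linarith [hle (cls1 M), hle (cls3 M), hle (cls4 M), hle (cls8 M), ew_nonneg hw (X5 P M)]

/-- The bound `B_1` of the theorem, determined by the matching `N` of size `n / 2`. -/
noncomputable def B1 (w : Sym2 α → ℝ) (P : Finset (P3 α)) (N : Finset (Sym2 α)) : ℝ :=
  (2 / 3 : ℝ) * ew w N + (1 / 2 : ℝ) * pw w P - (1 / 2 : ℝ) * maxSum w P

variable [Fintype α]

/-- The bound `B_2` of the theorem, determined by the matching `M` of size `n / 3`. -/
noncomputable def B2 (w : Sym2 α → ℝ) (P : Finset (P3 α)) (M : Finset (Sym2 α)) : ℝ :=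
  (2 / 3 : ℝ) * ew w M + (1 / 12 : ℝ) * ew w (Mset1' P M) +
    (1 / 6 : ℝ) * ew w (Mset1'' P M) + (1 / 4 : ℝ) * ew w (Mset1''' P M) +
    (1 / 6 : ℝ) * ew w (Mset2 P M) + (1 / 4 : ℝ) * ew w (Mset3 P M) +
    (1 / 3 : ℝ) * ew w (Mset4 P M) + (1 / 2 : ℝ) * ew w (X2 P M) +
    (1 / 2 : ℝ) * ew w (X3 w P M) + (1 / 2 : ℝ) * ew w (X4 w P M) +
    ew w (X5 P M) + (1 / 2 : ℝ) * ew w (X7 P M) - (1 / 4 : ℝ) * ew w (Y7 P M) +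
    (1 / 4 : ℝ) * ew w (Esub (psel P (cls6 M))) + (1 / 4 : ℝ) * ew w (Esub (psel P (cls8 M)))

/-- The bound `B_3` of the theorem, to which only the classes `P*_5`, …, `P*_8` contribute. -/
noncomputable def B3 (w : Sym2 α → ℝ) (P : Finset (P3 α)) (M : Finset (Sym2 α)) : ℝ :=
  (4 / 9 : ℝ) * (2 * ew w (Y5 P M) + 2 * ew w (Y6 P M) + ew w (Esub (psel P (cls7 M))) +
    ew w (Esub (psel P (cls8 M))) + maxSum w (psel P fun p => cls7 M p ∨ cls8 M p))

theorem ten_mul_pw_le (hw : ∀ e, 0 ≤ w e) (hP : PairwiseDisj P) (hPk : #P ≤ k)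
    (hM : IsMaxMatchingOfSize w k M) (hN : IsMaxMatchingOfSize w (Fintype.card α / 2) N) :
    10 * pw w P ≤ 8 * B1 w P N + 8 * B2 w P M + B3 w P M := by
  have hMmax := hP.maxSum_le_ew hPk hw hM
  have hNexchange := ew_X1_add_ew_Y2_add_sum_max_le hw hP hM.1 hN
  have hNunion : ew w (X1 w P M) + ew w (Y2 P M) + ew w M ≤ ew w N :=
    (add_le_add_right (Finset.sum_le_sum fun e _ => le_max_left _ _) _).trans hNexchange
  have hcredit := ew_X6_add_ew_X3_add_ew_X4_add_ew_le hw hP hM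
  rw [sum_credit] at hcredit
  have hY5 := ew_mono hw (Y5_subset_Mset4 (P := P) (M := M))
  have hY7 := ew_mono hw (Y7_subset_Mset3 (P := P) (M := M))
  have hclasses := six_mul_pw_le hw hP hM.1
  rw [B1, B2, B3, maxSum_psel_cls7_or_cls8]
  linarith

end Combination

theorem statement_18_general (w : Sym2 V → ℝ) (hw : ∀ e : Sym2 V, 0 ≤ w e) (k : ℕ)
    (P : Finset (P3 V)) (hP : PairwiseDisj P) (hPk : #P ≤ k)
    (M : Finset (Sym2 V)) (hM : IsMaxMatchingOfSize w k M)
    (N : Finset (Sym2 V)) (hN : IsMaxMatchingOfSize w (Fintype.card V / 2) N) :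
    (10 / 17 : ℝ) * pw w P ≤ max (max (B1 w P N) (B2 w P M)) (B3 w P M) := by
  have hsum := ten_mul_pw_le hw hP hPk hM hN
  have h1 : B1 w P N ≤ max (max (B1 w P N) (B2 w P M)) (B3 w P M) :=
    (le_max_left _ _).trans (le_max_left _ _)
  have h2 : B2 w P M ≤ max (max (B1 w P N) (B2 w P M)) (B3 w P M) :=
    (le_max_right _ _).trans (le_max_left _ _)
  have h3 : B3 w P M ≤ max (max (B1 w P N) (B2 w P M)) (B3 w P M) := le_max_right _ _
  linarith

theorem statement_18 (n : ℕ) (hn : Fintype.card V = n) (h3 : 3 ∣ n) (h2 : 2 ∣ n)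
    (w : Sym2 V → ℝ) (hw : ∀ e : Sym2 V, 0 ≤ w e)
    (M : Finset (Sym2 V)) (hM : IsMaxMatchingOfSize w (n / 3) M)
    (N : Finset (Sym2 V)) (hN : IsMaxMatchingOfSize w (n / 2) N)
    (Pstar : Finset (P3 V)) (hP : IsMaxPacking w Pstar) (hAss : Ass Pstar M) :
    (10 / 17 : ℝ) * pw w Pstar ≤
      max (max
        ((2 / 3 : ℝ) * ew w N + (1 / 2 : ℝ) * pw w Pstar - (1 / 2 : ℝ) * maxSum w Pstar)
        ((2 / 3 : ℝ) * ew w M + (1 / 12 : ℝ) * ew w (Mset1' Pstar M) +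
          (1 / 6 : ℝ) * ew w (Mset1'' Pstar M) + (1 / 4 : ℝ) * ew w (Mset1''' Pstar M) +
          (1 / 6 : ℝ) * ew w (Mset2 Pstar M) + (1 / 4 : ℝ) * ew w (Mset3 Pstar M) +
          (1 / 3 : ℝ) * ew w (Mset4 Pstar M) + (1 / 2 : ℝ) * ew w (X2 Pstar M) +
          (1 / 2 : ℝ) * ew w (X3 w Pstar M) + (1 / 2 : ℝ) * ew w (X4 w Pstar M) +
          ew w (X5 Pstar M) + (1 / 2 : ℝ) * ew w (X7 Pstar M) -
          (1 / 4 : ℝ) * ew w (Y7 Pstar M) +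
          (1 / 4 : ℝ) * ew w (Esub (psel Pstar (cls6 M))) +
          (1 / 4 : ℝ) * ew w (Esub (psel Pstar (cls8 M)))))
        ((4 / 9 : ℝ) * (2 * ew w (Y5 Pstar M) + 2 * ew w (Y6 Pstar M) +
          ew w (Esub (psel Pstar (cls7 M))) + ew w (Esub (psel Pstar (cls8 M))) +
          maxSum w (psel Pstar fun p => cls7 M p ∨ cls8 M p))) := by
  subst hn
  exact statement_18_general w hw _ Pstar hP.1.2.1 hP.1.1.le M hM N hN

end MW3PP
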